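/- Let 𝒢 be a nonempty Gδ subset of 2^ω with λ(𝒢) = 0, and let G be a Borel subset of ω^ω × 2^ω contained in ω^ω × 𝒢 such that every vertical section G_α = {β : (α,β) ∈ G} is a Gδ subset of 2^ω. Then there is a Borel map F : ω^ω → 𝓜 such that G_α = D(F(α)) for every α ∈ ω^ω. -/

import Mathlib

open MeasureTheory Filter Topology
open scoped ENNReal

/-- The basic cylinder `N_s` determined by a finite binary sequence `s`:
the set of all `β ∈ 2^ω` extending `s`. -/
def cyl (s : List Bool) : Set (ℕ → Bool) :=
  {β | ∀ i : Fin s.length, β i = s.get i}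

/-- The initial segment `β↾l` of `β ∈ 2^ω`, as a finite binary sequence. -/
def seg (β : ℕ → Bool) (l : ℕ) : List Bool := List.ofFn (fun i : Fin l => β i)

/-- A martingale: a `[0,1]`-valued function on finite binary sequences with
`f(s) = (f(s⌢0) + f(s⌢1))/2`. -/
def IsMartingale (f : List Bool → ℝ) : Prop :=
  (∀ s, f s ∈ Set.Icc (0:ℝ) 1) ∧
  ∀ s, f s = (f (s ++ [false]) + f (s ++ [true])) / 2

/-- The oscillation `osc(f,β) = inf_N sup_{p,q ≥ N} |f(β↾p) − f(β↾q)|`. -/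
noncomputable def osc (f : List Bool → ℝ) (β : ℕ → Bool) : ℝ :=
  ⨅ N : ℕ, ⨆ p : {n : ℕ // N ≤ n}, ⨆ q : {n : ℕ // N ≤ n},
    |f (seg β p.1) - f (seg β q.1)|

/-- The set of divergence `D(f) = {β : osc(f,β) > 0}`. -/
def divSet (f : List Bool → ℝ) : Set (ℕ → Bool) := {β | 0 < osc f β}

/-- `M` has density 1 at `β`: `λ(M ∩ N_{β↾l}) / λ(N_{β↾l}) → 1`. -/
def densityOne (μ : Measure (ℕ → Bool)) (M : Set (ℕ → Bool)) (β : ℕ → Bool) : Prop :=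
  Tendsto (fun l : ℕ => μ (M ∩ cyl (seg β l)) / μ (cyl (seg β l))) atTop (𝓝 1)

/-- A set is `Σ⁰₃` iff it is a countable union of `Gδ` sets. -/
def IsSigma03 {X : Type*} [TopologicalSpace X] (S : Set X) : Prop :=
  ∃ g : ℕ → Set X, (∀ n, IsGδ (g n)) ∧ S = ⋃ n, g n

/-- A set is coanalytic (`Π¹₁`) iff its complement is analytic. -/
def IsCoanalytic {X : Type*} [TopologicalSpace X] (S : Set X) : Prop :=
  MeasureTheory.AnalyticSet Sᶜ

/-- The associated (partial) function of a martingale: `ψ(f)(β) = lim_l f(β↾l)`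
(a junk value if the limit does not exist). -/
noncomputable def psi (f : List Bool → ℝ) (β : ℕ → Bool) : ℝ :=
  limUnder atTop (fun l => f (seg β l))

/-- The compact space `𝓜` of martingales, as a subspace of `[0,1]^{2^{<ω}}`. -/
abbrev Mart := {f : List Bool → ℝ // IsMartingale f}


lemma novikov {ι : Type*} [Encodable ι] {X : Type*} [TopologicalSpace X] [T2Space X]
    [MeasurableSpace X] [OpensMeasurableSpace X] (g : (ℕ → ℕ) → X) (hg : Continuous g)
    (O : ι → Set (ℕ → ℕ)) (hO : ∀ i, IsOpen (O i)) (I : Set ι) (h : ι → (ℕ → ℕ) → X)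
    (hh : ∀ i, Continuous (h i))
    (H : ∀ w, ∃ i, w ∈ O i ∧ (i ∈ I → g w ∉ Set.range (h i))) :
    ∃ E : ι → Set X, (∀ i, MeasurableSet (E i)) ∧ (∀ i ∈ I, Set.range (h i) ⊆ E i) ∧
      ∀ w, ∃ i, w ∈ O i ∧ g w ∉ E i := by
  classical
  let Sep : ℕ → (ℕ → ℕ) → Prop := fun n u => ∃ E : ι → Set X, (∀ i, MeasurableSet (E i)) ∧
    (∀ s ∈ I, ∀ z : ℕ → ℕ, (∀ i, Nat.pair (Encodable.encode s + 1) i < n →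
      z i = u (Nat.pair (Encodable.encode s + 1) i)) → h s z ∈ E s) ∧
    ∀ w : ℕ → ℕ, (∀ i, Nat.pair 0 i < n → w i = u (Nat.pair 0 i)) → ∃ i, w ∈ O i ∧ g w ∉ E i
  have step : ∀ n u, (∀ k, Sep (n+1) (Function.update u n k)) → Sep n u := by
    intro n u hk
    choose E hEm hE1 hE2 using hk
    obtain ⟨a, j, hn⟩ : ∃ a j, n = Nat.pair a j := ⟨_, _, (Nat.pair_unpair n).symm⟩
    have key : ∀ b, ∀ z : ℕ → ℕ, (∀ i, Nat.pair b i < n → z i = u (Nat.pair b i)) →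
        (b ≠ a → ∀ k, ∀ i, Nat.pair b i < n + 1 → z i = Function.update u n k (Nat.pair b i)) ∧
        (b = a → ∀ i, Nat.pair b i < n + 1 → z i = Function.update u n (z j) (Nat.pair b i)) := by
      intro b z hz
      constructor
      · intro hb k i hi
        have : Nat.pair b i ≠ n := by
          rw [hn]; intro hc; exact hb (Nat.pair_eq_pair.1 hc).1
        rw [Function.update_of_ne this]
        exact hz i (by omega)
      · intro hb i hi
        by_cases hc : Nat.pair b i = n
        · rw [hc, Function.update_self]
          rw [hn] at hc
          rw [(Nat.pair_eq_pair.1 hc).2]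
        · rw [Function.update_of_ne hc]
          exact hz i (by omega)
    refine ⟨fun s => if Encodable.encode s + 1 = a then ⋃ k, E k s else ⋂ k, E k s, ?_, ?_, ?_⟩
    · intro s
      dsimp only
      split_ifs
      · exact MeasurableSet.iUnion fun k => hEm k s
      · exact MeasurableSet.iInter fun k => hEm k s
    · intro s hs z hz
      dsimp only
      split_ifs with hc
      · exact Set.mem_iUnion.2 ⟨z j, hE1 _ s hs z ((key _ z hz).2 hc)⟩
      · exact Set.mem_iInter.2 fun k => hE1 k s hs z ((key _ z hz).1 hc k)
    · intro w hw
      by_cases ha : (0 : ℕ) = a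
      · obtain ⟨i, hi, hi'⟩ := hE2 _ w ((key _ w hw).2 ha)
        refine ⟨i, hi, ?_⟩
        dsimp only
        rw [if_neg (by omega)]
        exact fun hm => hi' (Set.mem_iInter.1 hm _)
      · have h1 := fun k => hE2 k w ((key _ w hw).1 ha k)
        choose s hs hs' using h1
        by_cases hall : ∃ k, Encodable.encode (s k) + 1 ≠ a
        · obtain ⟨k, hk⟩ := hall
          refine ⟨s k, hs k, ?_⟩
          dsimp only
          rw [if_neg hk]
          exact fun hm => hs' k (Set.mem_iInter.1 hm k)
        · push Not at hall
          refine ⟨s 0, hs 0, ?_⟩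
          dsimp only
          rw [if_pos (hall 0)]
          intro hm
          obtain ⟨k, hk⟩ := Set.mem_iUnion.1 hm
          have : s 0 = s k := Encodable.encode_injective (by have := hall 0; have := hall k; omega)
          rw [this] at hk
          exact hs' k hk
  by_cases h0 : Sep 0 0
  · obtain ⟨E, h1, h2, h3⟩ := h0
    refine ⟨E, h1, ?_, ?_⟩
    · rintro i hi _ ⟨z, rfl⟩
      exact h2 i hi z (by simp)
    · exact fun w => h3 w (by simp)
  exfalso
  have step' : ∀ n u, ¬ Sep n u → ∃ k, ¬ Sep (n+1) (Function.update u n k) := by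
    intro n u hn
    by_contra hc
    push Not at hc
    exact hn (step n u hc)
  choose! K hK using step'
  let U : ℕ → (ℕ → ℕ) := fun n => Nat.rec 0 (fun n u => Function.update u n (K n u)) n
  have hU : ∀ n, U (n+1) = Function.update (U n) n (K n (U n)) := fun n => rfl
  have hbad : ∀ n, ¬ Sep n (U n) := by
    intro n
    induction n with
    | zero => exact h0
    | succ n ih => rw [hU]; exact hK n _ ih
  let u : ℕ → ℕ := fun n => U (n+1) n
  have hag : ∀ n, ∀ i < n, U n i = u i := by
    intro n
    induction n with
    | zero => intro i hi; omega
    | succ n ih =>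
      intro i hi
      rcases Nat.lt_succ_iff_lt_or_eq.1 hi with hi | rfl
      · rw [hU, Function.update_of_ne (by omega)]; exact ih i hi
      · rfl
  have hbad' : ∀ n, ¬ Sep n u := by
    intro n hn
    apply hbad n
    obtain ⟨E, h1, h2, h3⟩ := hn
    refine ⟨E, h1, ?_, ?_⟩
    · intro s hs z hz
      exact h2 s hs z (fun i hi => by rw [hz i hi, hag n _ hi])
    · intro w hw
      exact h3 w (fun i hi => by rw [hw i hi, hag n _ hi])
  -- limit
  have cylOpen : ∀ (b : ℕ) (V : Set (ℕ → ℕ)), IsOpen V → (fun i => u (Nat.pair b i)) ∈ V →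
      ∃ n, ∀ m ≥ n, ∀ z : ℕ → ℕ, (∀ i, Nat.pair b i < m → z i = u (Nat.pair b i)) → z ∈ V := by
    intro b V hV hm
    obtain ⟨I, t, ht, hsub⟩ := isOpen_pi_iff.1 hV _ hm
    refine ⟨I.sup (fun i => Nat.pair b i) + 1, fun m hmn z hz => hsub ?_⟩
    intro i hi
    rw [hz i (by have := Finset.le_sup (f := fun i => Nat.pair b i) hi; omega)]
    exact (ht i hi).2
  obtain ⟨s, hs, hs'⟩ := H (fun i => u (Nat.pair 0 i))
  obtain ⟨n1, hn1⟩ := cylOpen 0 (O s) (hO s) hs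
  by_cases hsI : s ∈ I
  · have hne : g (fun i => u (Nat.pair 0 i)) ≠ h s (fun i => u (Nat.pair (Encodable.encode s + 1) i)) :=
      fun hc => hs' hsI ⟨_, hc.symm⟩
    obtain ⟨V, V', hV, hV', hgV, hhV', hdis⟩ := t2_separation hne
    obtain ⟨n2, hn2⟩ := cylOpen 0 _ (hV.preimage hg) hgV
    obtain ⟨n3, hn3⟩ := cylOpen _ _ (hV'.preimage (hh s)) hhV'
    refine hbad' (max n1 (max n2 n3)) ⟨fun i => if i = s then V' else Set.univ, ?_, ?_, ?_⟩
    · intro i; dsimp only; split_ifs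
      · exact hV'.measurableSet
      · exact MeasurableSet.univ
    · intro i hi z hz
      dsimp only
      split_ifs with hc
      · subst hc
        exact hn3 _ (by simp) z hz
      · trivial
    · intro w hw
      refine ⟨s, hn1 _ (by simp) w hw, ?_⟩
      dsimp only
      rw [if_pos rfl]
      intro hc
      exact Set.disjoint_left.1 hdis (hn2 _ (by simp) w hw) hc
  · refine hbad' n1 ⟨fun i => if i = s then ∅ else Set.univ, ?_, ?_, ?_⟩
    · intro i; dsimp only; split_ifs <;> simp
    · intro i hi z hz
      dsimp only
      rw [if_neg (by rintro rfl; exact hsI hi)]; trivial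
    · intro w hw
      exact ⟨s, hn1 _ le_rfl w hw, by simp⟩


instance polish_two : PolishSpace (ℕ → Bool) := ⟨⟩

instance polish_prod : PolishSpace ((ℕ → ℕ) × (ℕ → Bool)) := ⟨⟩

@[simp] lemma seg_length (β : ℕ → Bool) (k : ℕ) : (seg β k).length = k := by simp [seg]

lemma seg_eq_seg (β β' : ℕ → Bool) (k : ℕ) : seg β' k = seg β k ↔ ∀ i < k, β' i = β i := by
  unfold seg
  rw [List.ofFn_inj]
  constructor
  · intro h i hi
    exact congrFun h ⟨i, hi⟩
  · intro h
    funext i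
    exact h i i.2

lemma mem_cyl_iff (β : ℕ → Bool) (s : List Bool) : β ∈ cyl s ↔ seg β s.length = s := by
  constructor
  · intro h
    apply List.ext_get (by simp)
    intro n h1 h2
    have := h ⟨n, h2⟩
    simp only [seg, List.get_ofFn]
    exact this
  · intro h i
    have h2 : ∀ (t : List Bool), t = s → ∀ (h : i.1 < t.length), t.get ⟨i.1, h⟩ = s.get i := by
      rintro t rfl h; rfl
    have := h2 _ h (by simp)
    rw [← this]
    simp [seg]

lemma mem_cyl_seg (β β' : ℕ → Bool) (k : ℕ) : β' ∈ cyl (seg β k) ↔ seg β' k = seg β k := by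
  rw [mem_cyl_iff, seg_length]

lemma mem_cyl_self (β : ℕ → Bool) (k : ℕ) : β ∈ cyl (seg β k) := by
  rw [mem_cyl_seg]

lemma seg_succ (β : ℕ → Bool) (k : ℕ) : seg β (k+1) = seg β k ++ [β k] := by
  unfold seg
  rw [List.ofFn_succ_last]
  simp

lemma isClopen_cyl (s : List Bool) : IsClopen (cyl s) := by
  have : cyl s = ⋂ i : Fin s.length, (fun β : ℕ → Bool => β i) ⁻¹' {s.get i} := by
    ext β; simp [cyl]
  rw [this]
  exact isClopen_iInter_of_finite fun i => (isClopen_discrete _).preimage (by fun_prop)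

lemma cyl_nhds (y : ℕ → Bool) (V : Set (ℕ → Bool)) (hV : IsOpen V) (hy : y ∈ V) :
    ∃ k, cyl (seg y k) ⊆ V := by
  obtain ⟨I, t, ht, hsub⟩ := isOpen_pi_iff.1 hV _ hy
  refine ⟨I.sup id + 1, fun z hz => hsub ?_⟩
  rw [mem_cyl_seg, seg_eq_seg] at hz
  intro i hi
  rw [hz i (by have := Finset.le_sup (f := id) hi; simp only [id] at this; omega)]
  exact (ht i hi).2

lemma kunugi_sep (R B : Set ((ℕ → ℕ) × (ℕ → Bool))) (hR : AnalyticSet R) (hB : AnalyticSet B)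
    (H : ∀ p ∈ B, ∃ k, ∀ y', seg y' k = seg p.2 k → (p.1, y') ∉ R) :
    ∃ P : List Bool → Set (ℕ → ℕ), (∀ s, MeasurableSet (P s)) ∧
      (∀ x y k, x ∈ P (seg y k) → (x, y) ∉ R) ∧
      ∀ p ∈ B, ∃ k, p.1 ∈ P (seg p.2 k) := by
  classical
  rw [AnalyticSet] at hB
  rcases hB with rfl | ⟨g, hg, rfl⟩
  · exact ⟨fun _ => ∅, by simp, by simp, by simp⟩
  let Q : List Bool → Set (ℕ → ℕ) := fun s => Prod.fst '' (R ∩ Prod.snd ⁻¹' (cyl s))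
  have hQ : ∀ s, AnalyticSet (Q s) := by
    intro s
    apply AnalyticSet.image_of_continuous _ continuous_fst
    rw [Set.inter_eq_iInter]
    apply AnalyticSet.iInter
    intro b
    cases b
    · exact ((isClopen_cyl s).1.preimage continuous_snd).analyticSet
    · exact hR
  have hh : ∀ s, ∃ h : (ℕ → ℕ) → (ℕ → ℕ), Continuous h ∧ ((Q s).Nonempty → Set.range h = Q s) := by
    intro s
    have := hQ s
    rw [AnalyticSet] at this
    rcases this with h0 | ⟨h, hc, hr⟩
    · exact ⟨id, continuous_id, fun h => by simp [h0] at h⟩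
    · exact ⟨h, hc, fun _ => hr⟩
  choose h hc hr using hh
  obtain ⟨E, hE1, hE2, hE3⟩ := novikov (ι := List Bool) (fun w => (g w).1) (by fun_prop)
    (fun s => {w | (g w).2 ∈ cyl s})
    (fun s => (isClopen_cyl s).2.preimage (by fun_prop : Continuous fun w => (g w).2))
    {s | (Q s).Nonempty} h hc (by
      intro w
      obtain ⟨k, hk⟩ := H (g w) ⟨w, rfl⟩
      refine ⟨seg (g w).2 k, mem_cyl_self _ _, ?_⟩
      intro hne
      rw [hr _ hne]
      rintro ⟨⟨x, y⟩, ⟨hxR, hxc⟩, hx⟩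
      simp only at hx
      subst hx
      exact hk y ((mem_cyl_seg _ _ _).1 hxc) hxR)
  refine ⟨fun s => (E s)ᶜ, fun s => (hE1 s).compl, ?_, ?_⟩
  · intro x y k hx hR
    have hxQ : x ∈ Q (seg y k) := ⟨(x, y), ⟨hR, mem_cyl_self _ _⟩, rfl⟩
    apply hx
    apply hE2 _ ⟨x, hxQ⟩
    rw [hr _ ⟨x, hxQ⟩]
    exact hxQ
  · rintro _ ⟨w, rfl⟩
    obtain ⟨s, hs, hs'⟩ := hE3 w
    refine ⟨s.length, ?_⟩
    rw [(mem_cyl_iff _ _).1 hs]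
    exact hs'


/-- Countable unions of Borel sets with closed sections, disjoint from the range of `g`. -/
def SmallSet (g : (ℕ → ℕ) → (ℕ → ℕ) × (ℕ → Bool)) (C : Set ((ℕ → ℕ) × (ℕ → Bool))) : Prop :=
  ∃ P : ℕ → List Bool → Set (ℕ → ℕ), (∀ n s, MeasurableSet (P n s)) ∧
    (∀ x y, (x, y) ∈ C ↔ ∃ n, ∀ k, x ∉ P n (seg y k)) ∧ ∀ w, g w ∉ C

abbrev Pt := (ℕ → ℕ → (ℕ → ℕ)) × (ℕ → (ℕ → ℕ))

instance polish_Pt : PolishSpace Pt := ⟨⟩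

lemma SmallSet.iUnion {ι : Type*} [Countable ι] [Nonempty ι] {g}
    {C : ι → Set ((ℕ → ℕ) × (ℕ → Bool))}
    (h : ∀ i, SmallSet g (C i)) : SmallSet g (⋃ i, C i) := by
  choose P h1 h2 h3 using h
  obtain ⟨e, he⟩ := exists_surjective_nat ι
  refine ⟨fun n => P (e n.unpair.1) n.unpair.2, fun n s => h1 _ _ _, ?_, ?_⟩
  · intro x y
    rw [Set.mem_iUnion]
    constructor
    · rintro ⟨i, hi⟩
      obtain ⟨m, rfl⟩ := he i
      obtain ⟨n, hn⟩ := (h2 _ x y).1 hi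
      exact ⟨Nat.pair m n, by simpa using hn⟩
    · rintro ⟨n, hn⟩
      exact ⟨_, (h2 _ x y).2 ⟨_, hn⟩⟩
  · intro w hw
    obtain ⟨i, hi⟩ := Set.mem_iUnion.1 hw
    exact h3 i w hi

lemma SmallSet.union {g} {C D : Set ((ℕ → ℕ) × (ℕ → Bool))}
    (h : SmallSet g C) (h' : SmallSet g D) : SmallSet g (C ∪ D) := by
  rw [Set.union_eq_iUnion]
  apply SmallSet.iUnion
  intro b; cases b <;> assumption

lemma SmallSet.empty {g} : SmallSet g ∅ :=
  ⟨fun _ _ => Set.univ, by simp, by simp, by simp⟩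

lemma SmallSet.measurable {g} {C : Set ((ℕ → ℕ) × (ℕ → Bool))} (h : SmallSet g C) :
    MeasurableSet C := by
  obtain ⟨P, h1, h2, -⟩ := h
  have : C = ⋃ n, ⋂ s : List Bool, {p | p.2 ∈ cyl s → p.1 ∉ P n s} := by
    ext ⟨x, y⟩
    rw [h2]
    simp only [Set.mem_iUnion, Set.mem_iInter, Set.mem_setOf_eq]
    refine exists_congr fun n => ⟨fun h s hs => ?_, fun h k => h _ (mem_cyl_self _ _)⟩
    rw [← (mem_cyl_iff _ _).1 hs]
    exact h _
  rw [this]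
  refine MeasurableSet.iUnion fun n => MeasurableSet.iInter fun s => ?_
  have : {p : (ℕ → ℕ) × (ℕ → Bool) | p.2 ∈ cyl s → p.1 ∉ P n s} =
      (Prod.snd ⁻¹' (cyl s))ᶜ ∪ (Prod.fst ⁻¹' (P n s))ᶜ := by
    ext p; simp [imp_iff_not_or]
  rw [this]
  exact ((measurable_snd (isClopen_cyl s).2.measurableSet).compl).union
    (measurable_fst (h1 n s)).compl

structure Stage (f g : (ℕ → ℕ) → (ℕ → ℕ) × (ℕ → Bool)) (j : ℕ)
    (Γ : Set ((ℕ → ℕ) × (ℕ → Bool)) → Set Pt) : Prop where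
  mono : ∀ C C', C ⊆ C' → Γ C' ⊆ Γ C
  anal : ∀ C, SmallSet g C → AnalyticSet (Γ C)
  inv : ∀ C p q, p ∈ Γ C → (∀ a ≤ j, q.1 a = p.1 a) → (∀ i < j, q.2 i = p.2 i) → q ∈ Γ C
  mem : ∀ C, ∀ p ∈ Γ C, ∀ a ≤ j, ∀ b, f (p.1 a b) ∉ C ∧ (f (p.1 a b)).1 = (f (p.1 0 0)).1
  bad : ∀ C, SmallSet g C → (Γ C).Nonempty

lemma AnalyticSet_inter {α : Type*} [TopologicalSpace α] [T2Space α] {s t : Set α}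
    (hs : AnalyticSet s) (ht : AnalyticSet t) : AnalyticSet (s ∩ t) := by
  rw [Set.inter_eq_iInter]
  apply AnalyticSet.iInter
  intro b; cases b <;> assumption

lemma Stage.zero (f g : (ℕ → ℕ) → (ℕ → ℕ) × (ℕ → Bool)) (hf : Continuous f)
    (hbad : ∀ C, SmallSet g C → ¬ Set.range f ⊆ C) :
    ∃ Γ, Stage f g 0 Γ := by
  refine ⟨fun C => {p | ∀ b, f (p.1 0 b) ∉ C ∧ (f (p.1 0 b)).1 = (f (p.1 0 0)).1}, ?_, ?_, ?_, ?_, ?_⟩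
  · exact fun C C' h p hp b => ⟨fun hc => (hp b).1 (h hc), (hp b).2⟩
  · intro C hC
    have : {p : Pt | ∀ b, f (p.1 0 b) ∉ C ∧ (f (p.1 0 b)).1 = (f (p.1 0 0)).1} =
      ⋂ b : ℕ, ((fun p : Pt => f (p.1 0 b)) ⁻¹' Cᶜ ∩ {p : Pt | (f (p.1 0 b)).1 = (f (p.1 0 0)).1}) := by
      ext p; simp
    rw [this]
    refine AnalyticSet.iInter fun b => AnalyticSet_inter ?_ ?_
    · have h1 : Continuous fun p : Pt => f (p.1 0 b) := by fun_prop
      exact (hC.measurable.compl.analyticSet).preimage h1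
    · exact (isClosed_eq (by fun_prop) (by fun_prop)).analyticSet
  · intro C p q hp h1 h2 b
    rw [h1 0 le_rfl]; exact hp b
  · intro C p hp a ha b
    obtain rfl : a = 0 := by omega
    exact hp b
  · intro C hC
    obtain ⟨_, ⟨z, rfl⟩, hz⟩ := Set.not_subset.1 (hbad C hC)
    exact ⟨(fun _ _ => z, fun _ => z), fun b => ⟨hz, rfl⟩⟩

lemma Stage.step (f g : (ℕ → ℕ) → (ℕ → ℕ) × (ℕ → Bool)) (hf : Continuous f) (hg : Continuous g)
    (j : ℕ) (Γ) (hΓ : Stage f g j Γ) (a b : ℕ) (ha : a ≤ j) :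
    ∃ Γ', Stage f g (j+1) Γ' ∧ (∀ C, Γ' C ⊆ Γ C) ∧
      (∀ p ∈ Γ' ∅, ∀ q ∈ Γ' ∅, (∀ a < j, ∀ b < j, ∀ i < j, p.1 a b i = q.1 a b i) ∧
        (∀ a < j, ∀ i < j, p.2 a i = q.2 a i)) ∧
      (∀ p ∈ Γ' ∅, (g (p.2 j)).1 = (f (p.1 0 0)).1 ∧
        ∀ l, seg (f (p.1 (j+1) l)).2 l = seg (g (p.2 j)).2 l ∧
          (a < j → b < j → ∀ i < j, p.1 (j+1) l i = p.1 a b i)) := by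
  let D := (Fin j → Fin j → Fin j → ℕ) × (Fin j → Fin j → ℕ)
  let d : Pt → D := fun p => (fun a b i => p.1 a b i, fun a i => p.2 a i)
  have hd : Continuous d := by fun_prop
  obtain ⟨δ, hδ⟩ : ∃ δ : D, ∀ C, SmallSet g C → (Γ C ∩ d ⁻¹' {δ}).Nonempty := by
    by_contra hc
    push Not at hc
    choose C hC hCe using hc
    obtain ⟨p, hp⟩ := hΓ.bad _ (SmallSet.iUnion hC)
    have : p ∈ Γ (C (d p)) ∩ d ⁻¹' {d p} :=
      ⟨hΓ.mono _ _ (Set.subset_iUnion C (d p)) hp, rfl⟩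
    rw [hCe] at this
    exact this
  let Γa : Set ((ℕ → ℕ) × (ℕ → Bool)) → Set Pt := fun C => Γ C ∩ d ⁻¹' {δ}
  have hΓa : ∀ C, SmallSet g C → AnalyticSet (Γa C) := fun C hC =>
    AnalyticSet_inter (hΓ.anal C hC) (isClosed_singleton.preimage hd).analyticSet
  have hmono : ∀ C C', C ⊆ C' → Γa C' ⊆ Γa C := fun C C' h =>
    Set.inter_subset_inter_left _ (hΓ.mono _ _ h)
  have hinv : ∀ C p q, p ∈ Γa C → (∀ a ≤ j, q.1 a = p.1 a) → (∀ i < j, q.2 i = p.2 i) →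
      q ∈ Γa C := by
    intro C p q hp h1 h2
    refine ⟨hΓ.inv C p q hp.1 h1 h2, ?_⟩
    rw [Set.mem_preimage, ← hp.2]
    refine Prod.ext ?_ ?_
    · funext a b i
      change q.1 a b i = p.1 a b i
      rw [h1 a (by omega)]
    · funext a i
      change q.2 a i = p.2 a i
      rw [h2 a (by omega)]
  let Γ' : Set ((ℕ → ℕ) × (ℕ → Bool)) → Set Pt := fun C =>
    {p | p ∈ Γa C ∧ (g (p.2 j)).1 = (f (p.1 0 0)).1 ∧ ∀ l,
      ((f (p.1 (j+1) l)).1 = (f (p.1 0 0)).1 ∧ seg (f (p.1 (j+1) l)).2 l = seg (g (p.2 j)).2 l) ∧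
      p.1 (j+1) l ∈ (fun q : Pt => q.1 a b) '' (Γa C)}
  refine ⟨Γ', ⟨?_, ?_, ?_, ?_, ?_⟩, ?_, ?_, ?_⟩
  · intro C C' h p hp
    exact ⟨hmono _ _ h hp.1, hp.2.1, fun l => ⟨(hp.2.2 l).1, Set.image_mono (hmono _ _ h) (hp.2.2 l).2⟩⟩
  · intro C hC
    have : Γ' C = (Γa C ∩ {p : Pt | (g (p.2 j)).1 = (f (p.1 0 0)).1}) ∩ ⋂ l : ℕ,
        (({p : Pt | (f (p.1 (j+1) l)).1 = (f (p.1 0 0)).1} ∩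
         {p : Pt | ∀ i < l, (f (p.1 (j+1) l)).2 i = (g (p.2 j)).2 i}) ∩
         (fun p : Pt => p.1 (j+1) l) ⁻¹' ((fun q : Pt => q.1 a b) '' (Γa C))) := by
      ext p
      simp only [Γ', Set.mem_setOf_eq, Set.mem_inter_iff, Set.mem_iInter, Set.mem_preimage,
        seg_eq_seg, and_assoc]
    rw [this]
    refine AnalyticSet_inter (AnalyticSet_inter (hΓa C hC) (isClosed_eq (by fun_prop) (by fun_prop)).analyticSet) ?_
    refine AnalyticSet.iInter fun l => AnalyticSet_inter (AnalyticSet_inter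
      (isClosed_eq (by fun_prop) (by fun_prop)).analyticSet ?_) ?_
    · simp only [Set.setOf_forall]
      exact (isClosed_iInter fun i => isClosed_iInter fun _ =>
        isClosed_eq (by fun_prop) (by fun_prop)).analyticSet
    · apply AnalyticSet.preimage
      · apply AnalyticSet.image_of_continuous (hΓa C hC)
        fun_prop
      · fun_prop
  · intro C p q hp h1 h2
    refine ⟨hinv C p q hp.1 (fun a ha => h1 a (by omega)) (fun i hi => h2 i (by omega)), ?_⟩
    rw [h2 j (by omega), h1 0 (by omega), h1 (j+1) le_rfl]
    exact hp.2
  · intro C p hp a' ha' b'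
    rcases Nat.lt_or_ge a' (j+1) with h | h
    · exact hΓ.mem C p hp.1.1 a' (by omega) b'
    · obtain rfl : a' = j + 1 := by omega
      refine ⟨?_, (hp.2.2 b').1.1⟩
      obtain ⟨q, hq, hqe⟩ := (hp.2.2 b').2
      dsimp only at hqe
      rw [← hqe]
      exact (hΓ.mem C q hq.1 a ha b).1
  · -- badness
    intro C hC
    by_contra hemp
    rw [Set.not_nonempty_iff_eq_empty] at hemp
    let R : Set ((ℕ → ℕ) × (ℕ → Bool)) := (fun q : Pt => f (q.1 a b)) '' (Γa C)
    have hR : AnalyticSet R := AnalyticSet.image_of_continuous (hΓa C hC) (by fun_prop)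
    obtain ⟨P, hP1, hP2, hP3⟩ := kunugi_sep R (Set.range g) hR
      (analyticSet_range_of_polishSpace hg) (by
        rintro _ ⟨w, rfl⟩
        by_contra hc
        push Not at hc
        choose y hy hyR using hc
        choose q hq hqe using hyR
        dsimp only at hqe
        classical
        let p : Pt := (Function.update (q 0).1 (j+1) (fun l => (q l).1 a b),
          Function.update (q 0).2 j w)
        have e1 : ∀ a ≤ j, p.1 a = (q 0).1 a := fun a ha => Function.update_of_ne (by omega) _ _
        have e2 : ∀ i < j, p.2 i = (q 0).2 i := fun a ha => Function.update_of_ne (by omega) _ _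
        have e3 : p.1 (j+1) = fun l => (q l).1 a b := Function.update_self _ _ _
        have e4 : p.2 j = w := Function.update_self _ _ _
        have hx : (f ((q 0).1 0 0)).1 = (g w).1 := by
          rw [← (hΓ.mem C (q 0) (hq 0).1 a ha b).2, hqe 0]
        have : p ∈ Γ' C := by
          refine ⟨hinv C (q 0) p (hq 0) e1 e2, ?_, ?_⟩
          · rw [e4, e1 0 (by omega), hx]
          · intro l
            rw [e4, e1 0 (by omega), hx, e3]
            dsimp only
            refine ⟨⟨by rw [hqe], by rw [hqe]; exact hy l⟩, ⟨q l, hq l, rfl⟩⟩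
        rw [hemp] at this
        exact this)
    have hC' : SmallSet g {p | ∀ k, p.1 ∉ P (seg p.2 k)} := by
      refine ⟨fun _ => P, fun _ => hP1, by simp, ?_⟩
      intro w hw
      obtain ⟨k, hk⟩ := hP3 (g w) ⟨w, rfl⟩
      exact hw k hk
    obtain ⟨p, hp⟩ := hδ _ (hC.union hC')
    have h1 : f (p.1 a b) ∈ R := ⟨p, hmono _ _ Set.subset_union_left hp, rfl⟩
    apply (hΓ.mem _ p hp.1 a ha b).1
    right
    intro k hk
    exact hP2 _ _ k hk h1
  · exact fun C p hp => hp.1.1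
  · intro p hp q hq
    have h : d p = d q := (hp.1.2 : d p = δ).trans (hq.1.2 : d q = δ).symm
    constructor
    · intro a ha b hb i hi
      exact congrFun (congrFun (congrFun (congrArg Prod.fst h) ⟨a, ha⟩) ⟨b, hb⟩) ⟨i, hi⟩
    · intro a ha i hi
      exact congrFun (congrFun (congrArg Prod.snd h) ⟨a, ha⟩) ⟨i, hi⟩
  · intro p hp
    refine ⟨hp.2.1, fun l => ⟨(hp.2.2 l).1.2, fun ha hb i hi => ?_⟩⟩
    obtain ⟨q, hq, hqe⟩ := (hp.2.2 l).2
    dsimp only at hqe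
    rw [← hqe]
    have h : d p = d q := (hp.1.2 : d p = δ).trans (hq.2 : d q = δ).symm
    exact (congrFun (congrFun (congrFun (congrArg Prod.fst h) ⟨a, ha⟩) ⟨b, hb⟩) ⟨i, hi⟩).symm


lemma stages_limit (f g : (ℕ → ℕ) → (ℕ → ℕ) × (ℕ → Bool)) (hf : Continuous f) (hg : Continuous g)
    (hbad : ∀ C, SmallSet g C → ¬ Set.range f ⊆ C) (A B : ℕ → ℕ) (hA : ∀ j, A j ≤ j) :
    ∃ p : Pt, (∀ a b, (f (p.1 a b)).1 = (f (p.1 0 0)).1) ∧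
      (∀ j, (g (p.2 j)).1 = (f (p.1 0 0)).1) ∧
      (∀ j l, ∀ i < l, (f (p.1 (j+1) l)).2 i = (g (p.2 j)).2 i) ∧
      (∀ j l, A j < j → B j < j → ∀ i < j, p.1 (j+1) l i = p.1 (A j) (B j) i) := by
  obtain ⟨Γ0, hΓ0⟩ := Stage.zero f g hf hbad
  have step : ∀ j (S : {Γ // Stage f g j Γ}), ∃ S' : {Γ // Stage f g (j+1) Γ},
      (∀ C, S'.1 C ⊆ S.1 C) ∧
      (∀ p ∈ S'.1 ∅, ∀ q ∈ S'.1 ∅, (∀ a < j, ∀ b < j, ∀ i < j, p.1 a b i = q.1 a b i) ∧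
        (∀ a < j, ∀ i < j, p.2 a i = q.2 a i)) ∧
      (∀ p ∈ S'.1 ∅, (g (p.2 j)).1 = (f (p.1 0 0)).1 ∧
        ∀ l, seg (f (p.1 (j+1) l)).2 l = seg (g (p.2 j)).2 l ∧
          (A j < j → B j < j → ∀ i < j, p.1 (j+1) l i = p.1 (A j) (B j) i)) := by
    intro j S
    obtain ⟨Γ', h1, h2⟩ := Stage.step f g hf hg j S.1 S.2 (A j) (B j) (hA j)
    exact ⟨⟨Γ', h1⟩, h2⟩
  choose nxt n1 n2 n3 using step
  let S : ∀ j, {Γ // Stage f g j Γ} := fun j => Nat.rec ⟨Γ0, hΓ0⟩ nxt j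
  have hS : ∀ j, S (j+1) = nxt j (S j) := fun j => rfl
  have hanti : ∀ C, Antitone fun j => (S j).1 C :=
    fun C => antitone_nat_of_succ_le fun j => n1 j (S j) C
  have hne : ∀ j, ((S j).1 ∅).Nonempty := fun j => (S j).2.bad _ SmallSet.empty
  choose q hq using hne
  have hqk : ∀ j k, j ≤ k → q k ∈ (S j).1 ∅ := fun j k h => hanti ∅ h (hq k)
  let p : Pt := (fun a b i => (q (a + b + i + 2)).1 a b i, fun a i => (q (a + i + 2)).2 a i)
  have hp1 : ∀ a b i k, a + b + i + 2 ≤ k → (q k).1 a b i = p.1 a b i := by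
    intro a b i k hk
    exact (n2 (a+b+i+1) (S _) _ (hqk (a+b+i+2) k hk) _ (hqk (a+b+i+2) _ le_rfl)).1 a (by omega) b (by omega) i (by omega)
  have hp2 : ∀ a i k, a + i + 2 ≤ k → (q k).2 a i = p.2 a i := by
    intro a i k hk
    exact (n2 (a+i+1) (S _) _ (hqk (a+i+2) k hk) _ (hqk (a+i+2) _ le_rfl)).2 a (by omega) i (by omega)
  have ht : Tendsto q atTop (𝓝 p) := by
    rw [Prod.tendsto_iff]
    constructor
    · rw [tendsto_pi_nhds]; intro a
      rw [tendsto_pi_nhds]; intro b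
      rw [tendsto_pi_nhds]; intro i
      exact tendsto_const_nhds.congr' (by
        filter_upwards [eventually_ge_atTop (a+b+i+2)] with k hk
        exact (hp1 a b i k hk).symm)
    · rw [tendsto_pi_nhds]; intro a
      rw [tendsto_pi_nhds]; intro i
      exact tendsto_const_nhds.congr' (by
        filter_upwards [eventually_ge_atTop (a+i+2)] with k hk
        exact (hp2 a i k hk).symm)
  refine ⟨p, ?_, ?_, ?_, ?_⟩
  · intro a b
    have hc : IsClosed {p : Pt | (f (p.1 a b)).1 = (f (p.1 0 0)).1} :=
      isClosed_eq (by fun_prop) (by fun_prop)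
    refine hc.mem_of_tendsto ht ?_
    filter_upwards [eventually_ge_atTop a] with k hk
    exact ((S k).2.mem ∅ _ (hq k) a hk b).2
  · intro j
    have hc : IsClosed {p : Pt | (g (p.2 j)).1 = (f (p.1 0 0)).1} :=
      isClosed_eq (by fun_prop) (by fun_prop)
    refine hc.mem_of_tendsto ht ?_
    filter_upwards [eventually_ge_atTop (j+1)] with k hk
    exact (n3 j (S j) _ (hqk (j+1) k hk)).1
  · intro j l i hi
    have hc : IsClosed {p : Pt | (f (p.1 (j+1) l)).2 i = (g (p.2 j)).2 i} :=
      isClosed_eq (by fun_prop) (by fun_prop)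
    refine hc.mem_of_tendsto ht ?_
    filter_upwards [eventually_ge_atTop (j+1)] with k hk
    exact (seg_eq_seg _ _ _).1 ((n3 j (S j) _ (hqk (j+1) k hk)).2 l).1 i hi
  · intro j l h1 h2 i hi
    have hc : IsClosed {p : Pt | p.1 (j+1) l i = p.1 (A j) (B j) i} :=
      isClosed_eq (by fun_prop) (by fun_prop)
    refine hc.mem_of_tendsto ht ?_
    filter_upwards [eventually_ge_atTop (j+1)] with k hk
    exact ((n3 j (S j) _ (hqk (j+1) k hk)).2 l).2 h1 h2 i hi

theorem not_bad (G : Set ((ℕ → ℕ) × (ℕ → Bool)))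
    (hGsec : ∀ α : ℕ → ℕ, IsGδ {β | (α, β) ∈ G})
    (f g : (ℕ → ℕ) → (ℕ → ℕ) × (ℕ → Bool)) (hf : Continuous f) (hg : Continuous g)
    (hfG : ∀ z, f z ∉ G) (hgG : ∀ w, g w ∈ G)
    (hbad : ∀ C, SmallSet g C → ¬ Set.range f ⊆ C) : False := by
  let A : ℕ → ℕ := fun j => j.unpair.1.unpair.1
  let B : ℕ → ℕ := fun j => j.unpair.1.unpair.2
  have hA : ∀ j, A j ≤ j := fun j => (Nat.unpair_left_le _).trans (Nat.unpair_left_le _)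
  obtain ⟨p, h1, h2, h3, h4⟩ := stages_limit f g hf hg hbad A B hA
  set x := (f (p.1 0 0)).1 with hx
  let F : Set (ℕ → ℕ) := closure (Set.range fun ab : ℕ × ℕ => p.1 ab.1 ab.2)
  have hFc : IsClosed F := isClosed_closure
  have hF1 : ∀ z ∈ F, (f z).1 = x := by
    have hc : IsClosed {z | (f z).1 = x} := isClosed_eq (by fun_prop) (by fun_prop)
    intro z hz
    refine closure_minimal ?_ hc hz
    rintro _ ⟨ab, rfl⟩
    exact h1 _ _
  obtain ⟨U, hUo, hU⟩ := (hGsec x).eq_iInter_nat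
  have : PolishSpace F := hFc.polishSpace
  have : Nonempty F := ⟨⟨p.1 0 0, subset_closure ⟨(0,0), rfl⟩⟩⟩
  have : BaireSpace F := inferInstance
  have hcl : ∀ n, IsClosed {z : F | (f z.1).2 ∉ U n} := fun n =>
    (hUo n).isClosed_compl.preimage (by fun_prop : Continuous fun z : F => (f z.1).2)
  have hcov : (⋃ n, {z : F | (f z.1).2 ∉ U n}) = Set.univ := by
    ext z
    simp only [Set.mem_iUnion, Set.mem_univ, iff_true]
    by_contra hcon
    have : (f z.1).2 ∈ {β | (x, β) ∈ G} := by
      rw [hU, Set.mem_iInter]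
      intro n
      by_contra hn
      exact hcon ⟨n, hn⟩
    apply hfG z.1
    have h := hF1 z.1 z.2
    have : (x, (f z.1).2) ∈ G := this
    rw [← h] at this
    exact this
  obtain ⟨n, z0, hz0⟩ := nonempty_interior_of_iUnion_of_closed hcl hcov
  obtain ⟨W, hWsub, hWo, hzW⟩ := mem_interior.1 hz0
  obtain ⟨V, hVo, rfl⟩ := isOpen_induced_iff.1 hWo
  -- find a point of the countable set in V
  obtain ⟨_, hy, ⟨⟨a, b⟩, rfl⟩⟩ := mem_closure_iff.1 z0.2 V hVo hzW
  dsimp only at hy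
  obtain ⟨N, hN⟩ : ∃ N, ∀ z : ℕ → ℕ, (∀ i < N, z i = p.1 a b i) → z ∈ V := by
    obtain ⟨I, u, hu1, hu2⟩ := isOpen_pi_iff.1 hVo _ hy
    refine ⟨I.sup id + 1, fun z hz => hu2 fun i hi => ?_⟩
    rw [hz i (Nat.lt_succ_of_le (Finset.le_sup (f := id) hi))]
    exact (hu1 i hi).2
  let j := Nat.pair (Nat.pair a b) (N + a + b + 1)
  have hj : N + a + b + 1 ≤ j := Nat.right_le_pair _ _
  have hAj : A j = a := by simp [A, j]
  have hBj : B j = b := by simp [B, j]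
  have hin : ∀ l, (f (p.1 (j+1) l)).2 ∈ (U n)ᶜ := by
    intro l
    have hV : p.1 (j+1) l ∈ V := by
      apply hN
      intro i hi
      have := h4 j l (by omega) (by omega) i (by omega)
      rwa [hAj, hBj] at this
    exact hWsub (show (⟨p.1 (j+1) l, subset_closure ⟨(j+1, l), rfl⟩⟩ : F) ∈ _ from hV)
  have hlim : Tendsto (fun l => (f (p.1 (j+1) l)).2) atTop (𝓝 (g (p.2 j)).2) := by
    rw [tendsto_pi_nhds]
    intro i
    refine tendsto_const_nhds.congr' ?_
    filter_upwards [eventually_gt_atTop i] with l hl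
    exact (h3 j l i hl).symm
  have hend : (g (p.2 j)).2 ∈ (U n)ᶜ :=
    (hUo n).isClosed_compl.mem_of_tendsto hlim (Eventually.of_forall hin)
  apply hend
  have : (g (p.2 j)).2 ∈ {β | (x, β) ∈ G} := by
    show (x, (g (p.2 j)).2) ∈ G
    rw [← h2 j]
    exact hgG _
  rw [hU] at this
  exact Set.mem_iInter.1 this n

theorem borel_gdelta_uniform (G : Set ((ℕ → ℕ) × (ℕ → Bool))) (hG : MeasurableSet G)
    (hGsec : ∀ α : ℕ → ℕ, IsGδ {β | (α, β) ∈ G}) :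
    ∃ P : ℕ → List Bool → Set (ℕ → ℕ), (∀ n s, MeasurableSet (P n s)) ∧
      ∀ x y, (x, y) ∈ G ↔ ∀ n, ∃ k, x ∈ P n (seg y k) := by
  have b1 : AnalyticSet Gᶜ := hG.compl.analyticSet
  have b2 : AnalyticSet G := hG.analyticSet
  rw [AnalyticSet] at b1 b2
  rcases b1 with b1 | ⟨f, hf, hfr⟩
  · refine ⟨fun _ _ => Set.univ, by simp, fun x y => ?_⟩
    have : (x, y) ∉ Gᶜ := by rw [b1]; simp
    simpa using this
  rcases b2 with b2 | ⟨g, hg, hgr⟩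
  · refine ⟨fun _ _ => ∅, by simp, fun x y => ?_⟩
    rw [b2]; simp
  have hfG : ∀ z, f z ∉ G := fun z => by
    have : f z ∈ Gᶜ := by rw [← hfr]; exact ⟨z, rfl⟩
    exact this
  have hgG : ∀ w, g w ∈ G := fun z => by rw [← hgr]; exact ⟨z, rfl⟩
  by_contra hcon
  refine not_bad G hGsec f g hf hg hfG hgG ?_
  rintro C ⟨P, hP1, hP2, hP3⟩ hsub
  apply hcon
  refine ⟨P, hP1, fun x y => ?_⟩
  have : (x, y) ∈ C ↔ (x, y) ∉ G := by
    constructor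
    · intro h hn
      rw [← hgr] at hn
      obtain ⟨w, hw⟩ := hn
      exact hP3 w (hw ▸ h)
    · intro h
      apply hsub
      rw [hfr]; exact h
  rw [hP2] at this
  have := not_congr this
  push Not at this
  exact this.symm


/-- relative measure of `W` in the cylinder of `s`. -/
noncomputable def dn (μ : Measure (ℕ → Bool)) (W : Set (ℕ → Bool)) (s : List Bool) : ℝ :=
  μ.real (W ∩ cyl s) * 2 ^ s.length

def HalfM (μ : Measure (ℕ → Bool)) : Prop :=
  ∀ s : List Bool, μ (cyl s) = (1/2 : ℝ≥0∞) ^ s.length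

lemma HalfM.prob {μ} (h : HalfM μ) : IsProbabilityMeasure μ := by
  constructor
  have := h []
  have h2 : cyl [] = Set.univ := by
    ext β; rw [mem_cyl_iff]; simp [seg]
  rw [h2] at this
  simpa using this

lemma HalfM.real {μ} (h : HalfM μ) (s) : μ.real (cyl s) = (1/2 : ℝ) ^ s.length := by
  rw [Measure.real, h s]; simp

lemma half_mul_two (n : ℕ) : (1/2 : ℝ)^n * 2^n = 1 := by
  rw [← mul_pow]; norm_num

lemma dn_nonneg (μ W s) : 0 ≤ dn μ W s := by
  unfold dn; positivity

lemma dn_mono {μ} (h : HalfM μ) {W O} (hWO : W ⊆ O) (s) : dn μ W s ≤ dn μ O s := by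
  have := h.prob
  unfold dn
  exact mul_le_mul_of_nonneg_right (measureReal_mono (Set.inter_subset_inter_left _ hWO)) (by positivity)

lemma dn_le_one {μ} (h : HalfM μ) (W s) : dn μ W s ≤ 1 := by
  have := h.prob
  unfold dn
  calc μ.real (W ∩ cyl s) * 2 ^ s.length ≤ μ.real (cyl s) * 2 ^ s.length := by
        exact mul_le_mul_of_nonneg_right (measureReal_mono Set.inter_subset_right) (by positivity)
    _ = 1 := by rw [h.real, half_mul_two]

lemma dn_eq_one {μ} (h : HalfM μ) {W s} (hs : cyl s ⊆ W) : dn μ W s = 1 := by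
  unfold dn
  rw [Set.inter_eq_self_of_subset_right hs, h.real, half_mul_two]

lemma dn_union {μ} (h : HalfM μ) (W U s) : dn μ (W ∪ U) s ≤ dn μ W s + dn μ U s := by
  have := h.prob
  unfold dn
  rw [← add_mul, Set.union_inter_distrib_right]
  gcongr
  exact measureReal_union_le _ _

lemma cyl_split (s : List Bool) : cyl s = cyl (s ++ [false]) ∪ cyl (s ++ [true]) := by
  ext β
  simp only [Set.mem_union, mem_cyl_iff, List.length_append, List.length_singleton, seg_succ]
  constructor
  · intro hβ
    rw [hβ]
    cases β s.length <;> simp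
  · rintro (hh | hh) <;> exact (List.append_inj hh (by simp)).1

lemma cyl_disj (s : List Bool) : Disjoint (cyl (s ++ [false])) (cyl (s ++ [true])) := by
  rw [Set.disjoint_left]
  intro β h1 h2
  rw [mem_cyl_iff] at h1 h2
  simp only [List.length_append, List.length_singleton] at h1 h2
  rw [h1] at h2
  simp at h2

lemma dn_mart {μ} (h : HalfM μ) {W} (s) :
    dn μ W s = (dn μ W (s ++ [false]) + dn μ W (s ++ [true])) / 2 := by
  have := h.prob
  unfold dn
  have : μ.real (W ∩ cyl s) = μ.real (W ∩ cyl (s ++ [false])) + μ.real (W ∩ cyl (s ++ [true])) := by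
    have hm := measureReal_inter_add_sdiff (μ := μ) (s := W ∩ cyl s) (t := cyl (s ++ [false]))
      (isClopen_cyl _).2.measurableSet
    rw [← hm]
    have hd := Set.disjoint_left.1 (cyl_disj s)
    congr 2
    · ext β; rw [cyl_split s]
      simp only [Set.mem_inter_iff, Set.mem_union]; tauto
    · ext β; rw [cyl_split s]
      have := @hd β
      simp only [Set.mem_inter_iff, Set.mem_union, Set.mem_sdiff]; tauto
  rw [this]
  simp only [List.length_append, List.length_singleton, pow_succ]
  ring

/-- maximal inequality -/
lemma maximal {μ} (h : HalfM μ) (T : Set (ℕ → Bool)) (hT : MeasurableSet T) (δ : ℝ) (hδ : 0 < δ) :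
    μ {β | ∃ n, δ ≤ dn μ T (seg β n)} ≤ μ T / ENNReal.ofReal δ := by
  have := h.prob
  let S : Set (List Bool) := {s | δ ≤ dn μ T s ∧ ∀ t, t <+: s → t ≠ s → ¬ δ ≤ dn μ T t}
  have hcov : {β | ∃ n, δ ≤ dn μ T (seg β n)} ⊆ ⋃ s ∈ S, cyl s := by
    intro β hβ
    classical
    have hβ : ∃ n, δ ≤ dn μ T (seg β n) := hβ
    simp only [Set.mem_iUnion]
    refine ⟨seg β (Nat.find hβ), ⟨Nat.find_spec hβ, ?_⟩, mem_cyl_self _ _⟩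
    intro t ht hne
    have hlen := ht.length_le
    have hlt : t.length < Nat.find hβ := by
      rcases lt_or_eq_of_le hlen with h1 | h1
      · simpa using h1
      · exact absurd (ht.eq_of_length h1) hne
    have : t = seg β t.length := by
      have h2 : β ∈ cyl t := by
        obtain ⟨r, hr⟩ := ht
        intro i
        have : β i = (seg β (Nat.find hβ)).get ⟨i, lt_of_lt_of_le i.2 hlen⟩ := by
          simp [seg]
        rw [this]
        simp only [List.get_eq_getElem]
        simp only [← hr]
        rw [List.getElem_append_left]
      exact ((mem_cyl_iff _ _).1 h2).symm
    rw [this]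
    exact Nat.find_min hβ hlt
  have hdisj : S.PairwiseDisjoint (fun s => T ∩ cyl s) := by
    intro s hs t ht hst
    refine Set.disjoint_left.2 ?_
    rintro β ⟨_, h1⟩ ⟨_, h2⟩
    rw [mem_cyl_iff] at h1 h2
    have key : ∀ m n, m ≤ n → seg β m <+: seg β n := by
      intro m n hmn
      induction n, hmn using Nat.le_induction with
      | base => exact List.prefix_rfl
      | succ n _ ih => exact ih.trans ⟨[β n], (seg_succ _ _).symm⟩
    rcases le_total s.length t.length with hl | hl
    · have := key _ _ hl
      rw [h1, h2] at this
      exact ht.2 s this hst hs.1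
    · have := key _ _ hl
      rw [h1, h2] at this
      exact hs.2 t this (Ne.symm hst) ht.1
  have hδ0 : ENNReal.ofReal δ ≠ 0 := by simpa using hδ
  rw [ENNReal.le_div_iff_mul_le (Or.inl hδ0) (Or.inl ENNReal.ofReal_ne_top)]
  calc μ {β | ∃ n, δ ≤ dn μ T (seg β n)} * ENNReal.ofReal δ
      ≤ (∑' s : S, μ (cyl s)) * ENNReal.ofReal δ := by
        gcongr
        exact (measure_mono hcov).trans (measure_biUnion_le μ S.to_countable _)
    _ = ∑' s : S, μ (cyl s) * ENNReal.ofReal δ := by rw [ENNReal.tsum_mul_right]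
    _ ≤ ∑' s : S, μ (T ∩ cyl s) := by
        refine ENNReal.tsum_le_tsum fun s => ?_
        have h1 := s.2.1
        unfold dn at h1
        have h2 : μ.real (cyl s) * δ ≤ μ.real (T ∩ cyl s) := by
          rw [h.real]
          calc (1/2:ℝ)^s.1.length * δ ≤ (1/2:ℝ)^s.1.length * (μ.real (T ∩ cyl s) * 2 ^ s.1.length) := by gcongr
            _ = μ.real (T ∩ cyl s) * ((1/2:ℝ)^s.1.length * 2 ^ s.1.length) := by ring
            _ = _ := by rw [half_mul_two, mul_one]
        rw [← ofReal_measureReal (μ := μ) (s := cyl s), ← ofReal_measureReal (μ := μ) (s := T ∩ cyl s),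
          ← ENNReal.ofReal_mul measureReal_nonneg]
        exact ENNReal.ofReal_le_ofReal h2
    _ = μ (⋃ s ∈ S, T ∩ cyl s) :=
        (measure_biUnion S.to_countable hdisj fun s _ => hT.inter (isClopen_cyl _).2.measurableSet).symm
    _ ≤ μ T := measure_mono (by simp)

/-- The set of levels-`n` points whose cylinder is inside `O`. -/
def lev (O : Set (ℕ → Bool)) (n : ℕ) : Set (ℕ → Bool) := {β | cyl (seg β n) ⊆ O}

lemma seg_mono_eq {β γ : ℕ → Bool} {k n : ℕ} (hn : n ≤ k) (h : seg γ k = seg β k) :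
    seg γ n = seg β n := by
  rw [seg_eq_seg] at *
  exact fun i hi => h i (by omega)

lemma isOpen_lev (O n) : IsOpen (lev O n) := by
  rw [isOpen_iff_mem_nhds]
  intro β hβ
  refine mem_of_superset ((isClopen_cyl (seg β n)).2.mem_nhds (mem_cyl_self _ _)) ?_
  intro γ hγ
  rw [mem_cyl_seg] at hγ
  show cyl _ ⊆ O
  rw [hγ]; exact hβ

lemma lev_subset (O n) : lev O n ⊆ O := fun β h => h (mem_cyl_self _ _)

lemma lev_mono (O) : Monotone (lev O) := by
  intro m n hmn β hβ γ hγ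
  apply hβ
  rw [mem_cyl_seg] at *
  exact seg_mono_eq hmn hγ

lemma iUnion_lev {O} (hO : IsOpen O) : ⋃ n, lev O n = O := by
  apply Set.Subset.antisymm (Set.iUnion_subset fun n => lev_subset O n)
  intro β hβ
  obtain ⟨k, hk⟩ := cyl_nhds β O hO hβ
  exact Set.mem_iUnion.2 ⟨k, hk⟩

lemma not_lev {O} {β γ : ℕ → Bool} {n k} (hβ : β ∉ O) (hn : n ≤ k) (hγ : γ ∈ cyl (seg β k)) :
    γ ∉ lev O n := by
  intro hl
  apply hβ
  apply hl
  rw [mem_cyl_seg] at *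
  exact seg_mono_eq hn hγ.symm

lemma bad_null {μ} (h : HalfM μ) {W} (hW : IsOpen W) :
    μ {β | β ∉ W ∧ ¬ Tendsto (fun n => dn μ W (seg β n)) atTop (𝓝 0)} = 0 := by
  have := h.prob
  have key : ∀ j : ℕ, μ {β | β ∉ W ∧ ∃ᶠ n in atTop, (1/(j+1:ℝ)) ≤ dn μ W (seg β n)} = 0 := by
    intro j
    have hδ : (0:ℝ) < 1/(j+1:ℝ) := by positivity
    set δ := (1/(j+1:ℝ))
    have hb : ∀ k, μ {β | β ∉ W ∧ ∃ᶠ n in atTop, δ ≤ dn μ W (seg β n)} ≤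
        μ (W \ lev W k) / ENNReal.ofReal δ := by
      intro k
      refine le_trans (measure_mono ?_)
        (maximal h (W \ lev W k) (hW.measurableSet.diff (isOpen_lev W k).measurableSet) δ hδ)
      rintro β ⟨hβ, hf⟩
      obtain ⟨n, hn, hkn⟩ := (hf.and_eventually (eventually_ge_atTop k)).exists
      refine ⟨n, hn.trans (le_of_eq ?_)⟩
      unfold dn
      congr 2
      ext γ
      constructor
      · rintro ⟨h1, h2⟩
        exact ⟨⟨h1, not_lev hβ hkn h2⟩, h2⟩
      · rintro ⟨h1, h2⟩
        exact ⟨h1.1, h2⟩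
    have hlim : Tendsto (fun k => μ (W \ lev W k) / ENNReal.ofReal δ) atTop (𝓝 0) := by
      have h1 : Tendsto (fun k => μ (W \ lev W k)) atTop (𝓝 (μ (⋂ k, W \ lev W k))) := by
        apply tendsto_measure_iInter_atTop
        · exact fun k => (hW.measurableSet.diff (isOpen_lev W k).measurableSet).nullMeasurableSet
        · exact fun m n hmn => Set.sdiff_subset_sdiff_right (lev_mono W hmn)
        · exact ⟨0, measure_ne_top _ _⟩
      have h2 : ⋂ k, W \ lev W k = ∅ := by
        rw [← Set.sdiff_iUnion, iUnion_lev hW, Set.sdiff_self]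
      rw [h2, measure_empty] at h1
      have h3 := ENNReal.Tendsto.div_const h1 (b := ENNReal.ofReal δ) (Or.inr (by simpa using hδ))
      simpa using h3
    exact le_antisymm (ge_of_tendsto' hlim hb) zero_le
  refine measure_mono_null ?_ (measure_iUnion_null key)
  rintro β ⟨hβ, hn⟩
  rw [Set.mem_iUnion]
  by_contra hcon
  apply hn
  push Not at hcon
  rw [Metric.tendsto_atTop]
  intro ε hε
  obtain ⟨j, hj⟩ := exists_nat_one_div_lt hε
  have h1 : ¬ ∃ᶠ n in atTop, (1/(j+1:ℝ)) ≤ dn μ W (seg β n) := fun hf => hcon j ⟨hβ, hf⟩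
  rw [not_frequently, eventually_atTop] at h1
  obtain ⟨N, hN⟩ := h1
  refine ⟨N, fun n hn => ?_⟩
  have := hN n hn
  rw [Real.dist_eq, sub_zero, abs_of_nonneg (dn_nonneg _ _ _)]
  push Not at this
  linarith

structure LL (μ : Measure (ℕ → Bool)) (W O : Set (ℕ → Bool)) : Prop where
  oW : IsOpen W
  oO : IsOpen O
  sub : W ⊆ O
  lim : ∀ β, β ∉ O → Tendsto (fun n => dn μ W (seg β n)) atTop (𝓝 0)

lemma lemT {μ} (h : HalfM μ) {Z O : Set (ℕ → Bool)} (hZ : μ Z = 0) (hO : IsOpen O) (hZO : Z ⊆ O) :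
    ∃ U, Z ⊆ U ∧ LL μ U O := by
  have := h.prob
  have h1 : ∀ n : ℕ, ∃ V, Z ⊆ V ∧ IsOpen V ∧ μ V < ENNReal.ofReal ((1/4)^n) := fun n =>
    Z.exists_isOpen_lt_of_lt _ (by rw [hZ]; exact ENNReal.ofReal_pos.2 (by positivity))
  choose V hZV hVo hVm using h1
  let V' : ℕ → Set (ℕ → Bool) := fun n => ⋂ i ∈ Set.Iic n, V i
  have hV'o : ∀ n, IsOpen (V' n) := fun n => (Set.finite_Iic n).isOpen_biInter fun i _ => hVo i
  have hV'V : ∀ i n, i ≤ n → V' n ⊆ V i := fun i n hi => Set.biInter_subset_of_mem hi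
  have hZV' : ∀ n, Z ⊆ V' n := fun n => Set.subset_iInter₂ fun i _ => hZV i
  refine ⟨⋃ n, lev O n ∩ V' n, ?_, ?_, hO, ?_, ?_⟩
  · intro z hz
    have := hZO hz
    rw [← iUnion_lev hO] at this
    obtain ⟨n, hn⟩ := Set.mem_iUnion.1 this
    exact Set.mem_iUnion.2 ⟨n, hn, hZV' n hz⟩
  · exact isOpen_iUnion fun n => (isOpen_lev O n).inter (hV'o n)
  · exact Set.iUnion_subset fun n => Set.inter_subset_left.trans (lev_subset O n)
  · intro β hβ
    refine squeeze_zero (fun n => dn_nonneg _ _ _) (fun n => ?_)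
      (tendsto_pow_atTop_nhds_zero_of_lt_one (r := (1/2:ℝ)) (by norm_num) (by norm_num))
    have hsub : (⋃ n, lev O n ∩ V' n) ∩ cyl (seg β n) ⊆ V n := by
      rintro γ ⟨h1, h2⟩
      obtain ⟨i, hi1, hi2⟩ := Set.mem_iUnion.1 h1
      rcases le_total i n with hin | hin
      · exact absurd hi1 (not_lev hβ hin h2)
      · exact hV'V n i hin hi2
    have hm : μ.real ((⋃ n, lev O n ∩ V' n) ∩ cyl (seg β n)) ≤ (1/4)^n := by
      refine (measureReal_mono hsub).trans ?_
      exact ENNReal.toReal_le_of_le_ofReal (by positivity) (hVm n).le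
    unfold dn
    rw [seg_length]
    calc _ ≤ (1/4:ℝ)^n * 2^n := by gcongr
      _ = (1/2)^n := by rw [← mul_pow]; norm_num

lemma interp {μ} (h : HalfM μ) {W O : Set (ℕ → Bool)} (hWO : LL μ W O) :
    ∃ O', LL μ W O' ∧ LL μ O' O := by
  set Zb := {β | β ∉ W ∧ ¬ Tendsto (fun n => dn μ W (seg β n)) atTop (𝓝 0)} with hZb
  have hZ0 : μ (Zb ∩ O) = 0 := measure_mono_null Set.inter_subset_left (bad_null h hWO.oW)
  obtain ⟨U, hZU, hU⟩ := lemT h hZ0 hWO.oO Set.inter_subset_right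
  refine ⟨W ∪ U, ⟨hWO.oW, hWO.oW.union hU.oW, Set.subset_union_left, ?_⟩,
    ⟨hWO.oW.union hU.oW, hWO.oO, Set.union_subset hWO.sub hU.sub, ?_⟩⟩
  · intro β hβ
    by_cases hO : β ∈ O
    · by_contra hcon
      exact hβ (Or.inr (hZU ⟨⟨fun hw => hβ (Or.inl hw), hcon⟩, hO⟩))
    · exact hWO.lim β hO
  · intro β hβ
    have := (hWO.lim β hβ).add (hU.lim β hβ)
    rw [add_zero] at this
    exact squeeze_zero (fun n => dn_nonneg _ _ _) (fun n => dn_union h _ _ _) this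


/-- dyadic approximations of the Urysohn type function. -/
noncomputable def mm (μ : Measure (ℕ → Bool)) (mid : Set (ℕ → Bool) → Set (ℕ → Bool) → Set (ℕ → Bool)) :
    ℕ → Set (ℕ → Bool) → Set (ℕ → Bool) → List Bool → ℝ
  | 0, W, _, s => dn μ W s
  | n+1, W, O, s => (mm μ mid n W (mid W O) s + mm μ mid n (mid W O) O s) / 2

lemma lemZ {μ} (h : HalfM μ) {Z : Set (ℕ → Bool)} (hZ : μ Z = 0) (ε : ℝ) (hε : 0 < ε) :
    ∃ m : List Bool → ℝ, IsMartingale m ∧ m [] ≤ ε ∧ (∀ β, CauchySeq fun n => m (seg β n)) ∧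
      ∀ β ∈ Z, ∀ᶠ n in atTop, m (seg β n) = 1 := by
  have := h.prob
  have hmid : ∀ W O : Set (ℕ → Bool), ∃ O', LL μ W O → LL μ W O' ∧ LL μ O' O := by
    intro W O
    by_cases hL : LL μ W O
    · obtain ⟨O', h1⟩ := interp h hL
      exact ⟨O', fun _ => h1⟩
    · exact ⟨∅, fun h1 => absurd h1 hL⟩
  choose mid hmid using hmid
  obtain ⟨O, hZO, hO, hOε⟩ := Z.exists_isOpen_lt_of_lt (μ := μ) (ENNReal.ofReal ε)
    (by rw [hZ]; exact ENNReal.ofReal_pos.2 hε)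
  obtain ⟨W, hZW, hWO⟩ := lemT h hZ hO hZO
  let M := mm μ mid
  -- basic bounds
  have hlow : ∀ n W O, LL μ W O → ∀ s, dn μ W s ≤ M n W O s ∧ M n W O s ≤ dn μ O s := by
    intro n
    induction n with
    | zero => exact fun W O hL s => ⟨le_rfl, dn_mono h hL.sub s⟩
    | succ n ih =>
      intro W O hL s
      obtain ⟨h1, h2⟩ := hmid W O hL
      have a1 := ih _ _ h1 s
      have a2 := ih _ _ h2 s
      have b1 := dn_mono h h1.sub s
      have b2 := dn_mono h h2.sub s
      simp only [M, mm] at *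
      constructor <;> linarith
  have hdiff : ∀ n W O, LL μ W O → ∀ s, 0 ≤ M (n+1) W O s - M n W O s ∧
      M (n+1) W O s - M n W O s ≤ (1/2)^(n+1) * (dn μ O s - dn μ W s) := by
    intro n
    induction n with
    | zero =>
      intro W O hL s
      obtain ⟨h1, h2⟩ := hmid W O hL
      have b1 := dn_mono h h1.sub s
      have b2 := dn_mono h h2.sub s
      simp only [M, mm]
      constructor <;> norm_num <;> linarith
    | succ n ih =>
      intro W O hL s
      obtain ⟨h1, h2⟩ := hmid W O hL
      have a1 := ih _ _ h1 s
      have a2 := ih _ _ h2 s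
      have e1 : M (n+1+1) W O s = (M (n+1) W (mid W O) s + M (n+1) (mid W O) O s)/2 := rfl
      have e2 : M (n+1) W O s = (M n W (mid W O) s + M n (mid W O) O s)/2 := rfl
      rw [e1, e2, pow_succ (1/2:ℝ) (n+1)]
      constructor <;> linarith
  have hmart : ∀ n W O s, M n W O s = (M n W O (s ++ [false]) + M n W O (s ++ [true])) / 2 := by
    intro n
    induction n with
    | zero => exact fun W O s => dn_mart h s
    | succ n ih =>
      intro W O s
      have e1 : ∀ s, M (n+1) W O s = (M n W (mid W O) s + M n (mid W O) O s)/2 := fun s => rfl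
      rw [e1, e1, e1, ih W (mid W O) s, ih (mid W O) O s]
      ring
  have hzero : ∀ n W O, LL μ W O → ∀ β, β ∉ O →
      Tendsto (fun k => M n W O (seg β k)) atTop (𝓝 0) := by
    intro n
    induction n with
    | zero => exact fun W O hL β hβ => hL.lim β hβ
    | succ n ih =>
      intro W O hL β hβ
      obtain ⟨h1, h2⟩ := hmid W O hL
      have := ((ih _ _ h1 β (fun hh => hβ (h2.sub hh))).add (ih _ _ h2 β hβ)).div_const 2
      simpa [M, mm] using this
  have hone' : ∀ W : Set (ℕ → Bool), IsOpen W → ∀ β ∈ W, ∀ᶠ k in atTop, dn μ W (seg β k) = 1 := by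
    intro W hW β hβ
    obtain ⟨k, hk⟩ := cyl_nhds β W hW hβ
    filter_upwards [eventually_ge_atTop k] with j hj
    apply dn_eq_one h
    intro γ hγ
    apply hk
    rw [mem_cyl_seg] at *
    exact seg_mono_eq hj hγ
  have hosc : ∀ n W O, LL μ W O → ∀ β, ∃ c : ℝ, ∀ δ > 0, ∀ᶠ k in atTop,
      c - δ ≤ M n W O (seg β k) ∧ M n W O (seg β k) ≤ c + (1/2)^n + δ := by
    intro n
    induction n with
    | zero =>
      intro W O hL β
      refine ⟨0, fun δ hδ => Eventually.of_forall fun k => ?_⟩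
      have h1 := dn_nonneg μ W (seg β k)
      have h2 := dn_le_one h W (seg β k)
      simp only [M, mm]
      constructor
      · linarith
      · norm_num; linarith
    | succ n ih =>
      intro W O hL β
      obtain ⟨h1, h2⟩ := hmid W O hL
      have e1 : ∀ s, M (n+1) W O s = (M n W (mid W O) s + M n (mid W O) O s)/2 := fun s => rfl
      by_cases hβ : β ∈ mid W O
      · obtain ⟨c, hc⟩ := ih _ _ h1 β
        refine ⟨c/2 + 1/2, fun δ hδ => ?_⟩
        filter_upwards [hc δ hδ, hone' _ h2.oW β hβ] with k hk1 hk2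
        have a2 := hlow n _ _ h2 (seg β k)
        have a3 := dn_le_one h O (seg β k)
        rw [e1, pow_succ]
        constructor <;> linarith
      · obtain ⟨c, hc⟩ := ih _ _ h2 β
        refine ⟨c/2, fun δ hδ => ?_⟩
        have a1 := (hzero n _ _ h1 β hβ).eventually (gt_mem_nhds hδ)
        filter_upwards [hc δ hδ, a1] with k hk1 hk2
        have a2 := hlow n _ _ h1 (seg β k)
        have a3 := dn_nonneg μ W (seg β k)
        rw [e1, pow_succ]
        constructor <;> linarith
  -- the limit
  have hd1 : ∀ s n, dist (M n W O s) (M (n+1) W O s) ≤ (1/2) * (1/2)^n := by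
    intro s n
    obtain ⟨a1, a2⟩ := hdiff n W O hWO s
    have b1 := dn_nonneg μ W s
    have b2 := dn_le_one h O s
    have b3 : (0:ℝ) ≤ (1/2)^(n+1) := by positivity
    rw [dist_comm, Real.dist_eq, abs_of_nonneg a1]
    calc _ ≤ _ := a2
      _ ≤ (1/2)^(n+1) * 1 := by gcongr; linarith
      _ = _ := by rw [pow_succ]; ring
  have hex : ∀ s, ∃ l, Tendsto (fun n => M n W O s) atTop (𝓝 l) := fun s =>
    cauchySeq_tendsto_of_complete (cauchySeq_of_le_geometric (1/2) (1/2) (by norm_num) (hd1 s))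
  choose m hm using hex
  have hmd : ∀ s n, |M n W O s - m s| ≤ (1/2)^n := by
    intro s n
    have := dist_le_of_le_geometric_of_tendsto (1/2) (1/2) (by norm_num) (hd1 s) (hm s) n
    rw [Real.dist_eq] at this
    refine this.trans (le_of_eq ?_)
    ring
  have hml : ∀ s, dn μ W s ≤ m s ∧ m s ≤ dn μ O s := fun s =>
    ⟨ge_of_tendsto' (hm s) fun n => (hlow n W O hWO s).1,
      le_of_tendsto' (hm s) fun n => (hlow n W O hWO s).2⟩
  refine ⟨m, ⟨fun s => ⟨(dn_nonneg _ _ _).trans (hml s).1, (hml s).2.trans (dn_le_one h _ _)⟩, ?_⟩,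
    ?_, ?_, ?_⟩
  · intro s
    refine tendsto_nhds_unique (hm s) ?_
    refine (((hm _).add (hm _)).div_const 2).congr fun n => ?_
    exact (hmart n W O s).symm
  · refine (hml []).2.trans ?_
    unfold dn
    simp only [List.length_nil, pow_zero, mul_one]
    refine (measureReal_mono Set.inter_subset_left).trans ?_
    exact ENNReal.toReal_le_of_le_ofReal hε.le hOε.le
  · intro β
    rw [Metric.cauchySeq_iff]
    intro e he
    obtain ⟨n, hn⟩ := exists_pow_lt_of_lt_one (show 0 < e/5 by positivity) (show (1/2:ℝ) < 1 by norm_num)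
    obtain ⟨c, hc⟩ := hosc n W O hWO β
    obtain ⟨N, hN⟩ := eventually_atTop.1 (hc (e/10) (by positivity))
    refine ⟨N, fun p hp q hq => ?_⟩
    have p1 := hN p hp
    have q1 := hN q hq
    have p2 := abs_le.1 (hmd (seg β p) n)
    have q2 := abs_le.1 (hmd (seg β q) n)
    rw [Real.dist_eq, abs_lt]
    constructor <;> linarith
  · intro β hβ
    filter_upwards [hone' W hWO.oW β (hZW hβ)] with k hk
    have := hml (seg β k)
    have := dn_le_one h O (seg β k)
    linarith


lemma osc_pos {f : List Bool → ℝ} (hf : ∀ s, f s ∈ Set.Icc (0:ℝ) 1) (β : ℕ → Bool) (c : ℝ) (hc : 0 < c)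
    (h : ∀ N, ∃ p ≥ N, ∃ q ≥ N, c ≤ |f (seg β p) - f (seg β q)|) : 0 < osc f β := by
  refine lt_of_lt_of_le hc (le_ciInf fun N => ?_)
  obtain ⟨p, hp, q, hq, hpq⟩ := h N
  have hab : ∀ a b, |f (seg β a) - f (seg β b)| ≤ 1 := fun a b => by
    have h1 := hf (seg β a)
    have h2 := hf (seg β b)
    rw [abs_le]; constructor <;> linarith [h1.1, h1.2, h2.1, h2.2]
  have : Nonempty {n : ℕ // N ≤ n} := ⟨⟨N, le_rfl⟩⟩
  have h1 : ∀ p : {n : ℕ // N ≤ n}, BddAbove (Set.range fun q : {n : ℕ // N ≤ n} => |f (seg β p.1) - f (seg β q.1)|) := by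
    intro p
    refine ⟨1, ?_⟩
    rintro _ ⟨q, rfl⟩
    exact hab _ _
  have h2 : BddAbove (Set.range fun p : {n : ℕ // N ≤ n} => ⨆ q : {n : ℕ // N ≤ n}, |f (seg β p.1) - f (seg β q.1)|) := by
    refine ⟨1, ?_⟩
    rintro _ ⟨p, rfl⟩
    exact ciSup_le fun q => hab _ _
  calc c ≤ |f (seg β p) - f (seg β q)| := hpq
    _ ≤ ⨆ q : {n : ℕ // N ≤ n}, |f (seg β p) - f (seg β q.1)| := le_ciSup (h1 ⟨p, hp⟩) ⟨q, hq⟩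
    _ ≤ _ := le_ciSup h2 ⟨p, hp⟩

lemma osc_zero {f : List Bool → ℝ} (β : ℕ → Bool) (h : CauchySeq fun n => f (seg β n)) :
    ¬ 0 < osc f β := by
  intro hpos
  obtain ⟨N, hN⟩ := Metric.cauchySeq_iff.1 h (osc f β / 2) (by linarith)
  have hb : BddBelow (Set.range fun N : ℕ => ⨆ p : {n : ℕ // N ≤ n}, ⨆ q : {n : ℕ // N ≤ n},
    |f (seg β p.1) - f (seg β q.1)|) := by
    refine ⟨0, ?_⟩
    rintro _ ⟨M, rfl⟩
    exact Real.iSup_nonneg fun p => Real.iSup_nonneg fun q => abs_nonneg _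
  have : Nonempty {n : ℕ // N ≤ n} := ⟨⟨N, le_rfl⟩⟩
  have : osc f β ≤ osc f β / 2 := by
    refine (ciInf_le hb N).trans ?_
    exact ciSup_le fun p => ciSup_le fun q => (hN p.1 p.2 q.1 q.2).le
  linarith

section Strategy

variable (mk : List Bool → List Bool → ℝ) (P : ℕ → List Bool → Set (ℕ → ℕ))

def start (h : List (List Bool)) : List Bool := h.headD []

noncomputable def VV : List (List Bool) → ℝ
  | [] => 1/2
  | r :: h => VV h + (if VV h ≤ 1/2 then 1 else -1) / 4 * (mk (start h) r - mk (start h) (start h))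

noncomputable def val (h : List (List Bool)) (s : List Bool) : ℝ :=
  VV mk h + (if VV mk h ≤ 1/2 then 1 else -1) / 4 * (mk (start h) s - mk (start h) (start h))

def Cond (x : ℕ → ℕ) (h : List (List Bool)) (s : List Bool) : Prop :=
  3/4 ≤ mk (start h) s ∧ ∀ n ≤ h.length, ∃ t, t <+: s ∧ x ∈ P n t

open Classical in
noncomputable def histR (x : ℕ → ℕ) : List Bool → List (List Bool)
  | [] => []
  | i :: s => if Cond mk P x (histR x s) (i :: s).reverse then (i :: s).reverse :: histR x s
      else histR x s

noncomputable def hist (x : ℕ → ℕ) (s : List Bool) : List (List Bool) := histR mk P x s.reverse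

lemma hist_nil (x) : hist mk P x [] = [] := rfl

lemma hist_pos (x s i) (h : Cond mk P x (hist mk P x s) (s ++ [i])) :
    hist mk P x (s ++ [i]) = (s ++ [i]) :: hist mk P x s := by
  unfold hist at *
  have e : (s ++ [i]).reverse = i :: s.reverse := by simp
  rw [e, histR, List.reverse_cons, List.reverse_reverse]
  rw [if_pos h]

lemma hist_neg (x s i) (h : ¬ Cond mk P x (hist mk P x s) (s ++ [i])) :
    hist mk P x (s ++ [i]) = hist mk P x s := by
  unfold hist at *
  have e : (s ++ [i]).reverse = i :: s.reverse := by simp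
  rw [e, histR, List.reverse_cons, List.reverse_reverse]
  rw [if_neg h]

noncomputable def FF (x : ℕ → ℕ) (s : List Bool) : ℝ := val mk (hist mk P x s) s

lemma val_cons (h t) : val mk (t :: h) t = val mk h t := by
  simp [val, VV, start]

lemma FF_append (x s i) : FF mk P x (s ++ [i]) = val mk (hist mk P x s) (s ++ [i]) := by
  unfold FF
  by_cases h : Cond mk P x (hist mk P x s) (s ++ [i])
  · rw [hist_pos _ _ _ _ _ h, val_cons]
  · rw [hist_neg _ _ _ _ _ h]

variable {mk}

lemma VV_bd (hmk : ∀ r, IsMartingale (mk r)) (hmk4 : ∀ r, mk r r ≤ 1/4)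
    (x s) : VV mk (hist mk P x s) ∈ Set.Icc (1/4:ℝ) (3/4) := by
  induction s using List.reverseRecOn with
  | nil => rw [hist_nil]; simp only [VV]; constructor <;> norm_num
  | append_singleton s i ih =>
    by_cases h : Cond mk P x (hist mk P x s) (s ++ [i])
    · rw [hist_pos _ _ _ _ _ h]
      set g := hist mk P x s
      have h1 := h.1
      have h2 := ((hmk (start g)).1 (s ++ [i])).2
      have h3 := ((hmk (start g)).1 (start g)).1
      have h4 := hmk4 (start g)
      obtain ⟨h5, h6⟩ := ih
      simp only [VV]
      split_ifs with h7 <;> constructor <;> linarith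
    · rwa [hist_neg _ _ _ _ _ h]

lemma FF_mart (hmk : ∀ r, IsMartingale (mk r)) (hmk4 : ∀ r, mk r r ≤ 1/4)
    (x) : IsMartingale (FF mk P x) := by
  constructor
  · intro s
    have hv := VV_bd P hmk hmk4 x s
    unfold FF val
    set g := hist mk P x s
    have h1 := ((hmk (start g)).1 s).1
    have h2 := ((hmk (start g)).1 s).2
    have h3 := ((hmk (start g)).1 (start g)).1
    have h4 := hmk4 (start g)
    obtain ⟨h5, h6⟩ := hv
    split_ifs with h7 <;> constructor <;> linarith
  · intro s
    rw [FF_append, FF_append]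
    unfold FF val
    rw [(hmk (start (hist mk P x s))).2 s]
    ring

variable {P}

lemma cond_meas (hP : ∀ n s, MeasurableSet (P n s)) (h s) : MeasurableSet {x | Cond mk P x h s} := by
  have : {x | Cond mk P x h s} = {x | 3/4 ≤ mk (start h) s} ∩
      ⋂ n : ℕ, ⋂ (_ : n ≤ h.length), ⋃ t : List Bool, ⋃ (_ : t <+: s), P n t := by
    ext x; simp [Cond]
  rw [this]
  refine (MeasurableSet.const _).inter ?_
  exact MeasurableSet.iInter fun n => MeasurableSet.iInter fun _ => MeasurableSet.iUnion fun t =>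
    MeasurableSet.iUnion fun _ => hP n t

lemma hist_meas (hP : ∀ n s, MeasurableSet (P n s)) (s h) : MeasurableSet {x | hist mk P x s = h} := by
  induction s using List.reverseRecOn generalizing h with
  | nil => simp only [hist_nil]; exact MeasurableSet.const _
  | append_singleton s i ih =>
    have : {x | hist mk P x (s ++ [i]) = h} = ⋃ h', ({x | hist mk P x s = h'} ∩
        (({x | Cond mk P x h' (s ++ [i])} ∩ {_x | (s ++ [i]) :: h' = h}) ∪
          ({x | Cond mk P x h' (s ++ [i])}ᶜ ∩ {_x | h' = h}))) := by
      ext x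
      simp only [Set.mem_iUnion, Set.mem_inter_iff, Set.mem_union, Set.mem_compl_iff]
      constructor
      · intro hx
        refine ⟨hist mk P x s, rfl, ?_⟩
        by_cases hc : Cond mk P x (hist mk P x s) (s ++ [i])
        · exact Or.inl ⟨hc, by rw [← hist_pos _ _ _ _ _ hc]; exact hx⟩
        · exact Or.inr ⟨hc, by rw [← hist_neg _ _ _ _ _ hc]; exact hx⟩
      · rintro ⟨h', hh, ⟨h1, h2⟩ | ⟨h1, h2⟩⟩
        · have hh : hist mk P x s = h' := hh
          subst hh
          exact (hist_pos _ _ _ _ _ h1).trans h2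
        · have hh : hist mk P x s = h' := hh
          subst hh
          exact (hist_neg _ _ _ _ _ h1).trans h2
    rw [this]
    refine MeasurableSet.iUnion fun h' => (ih h').inter ?_
    exact ((cond_meas hP _ _).inter (MeasurableSet.const _)).union
      ((cond_meas hP _ _).compl.inter (MeasurableSet.const _))

lemma FF_meas (hP : ∀ n s, MeasurableSet (P n s)) (s) : Measurable fun x => FF mk P x s := by
  intro B _
  have : (fun x => FF mk P x s) ⁻¹' B = ⋃ h', ({x | hist mk P x s = h'} ∩ {_x | val mk h' s ∈ B}) := by
    ext x
    simp [FF]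
  rw [this]
  exact MeasurableSet.iUnion fun h' => (hist_meas hP _ _).inter (MeasurableSet.const _)

lemma seg_prefix (β : ℕ → Bool) {m n : ℕ} (hmn : m ≤ n) : seg β m <+: seg β n := by
  induction n, hmn using Nat.le_induction with
  | base => exact List.prefix_rfl
  | succ n _ ih => exact ih.trans ⟨[β n], (seg_succ _ _).symm⟩

lemma prefix_seg (β : ℕ → Bool) {t n} (h : t <+: seg β n) : t = seg β t.length := by
  have h1 : t.length ≤ n := by simpa using h.length_le
  exact (List.prefix_of_prefix_length_le h (seg_prefix β h1) (by simp)).eq_of_length (by simp)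

/-- switching at step `k`. -/
def Sw (mk : List Bool → List Bool → ℝ) (P : ℕ → List Bool → Set (ℕ → ℕ)) (x : ℕ → ℕ) (β : ℕ → Bool) (k : ℕ) : Prop :=
  Cond mk P x (hist mk P x (seg β k)) (seg β (k+1))

lemma sw_pos {x β k} (h : Sw mk P x β k) :
    hist mk P x (seg β (k+1)) = seg β (k+1) :: hist mk P x (seg β k) := by
  unfold Sw at h
  rw [seg_succ] at *
  exact hist_pos _ _ _ _ _ h

lemma sw_neg {x β k} (h : ¬ Sw mk P x β k) :
    hist mk P x (seg β (k+1)) = hist mk P x (seg β k) := by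
  unfold Sw at h
  rw [seg_succ] at *
  exact hist_neg _ _ _ _ _ h

lemma sw_const {x β k} (n) (hkn : k ≤ n) (h : ∀ j, k ≤ j → j < n → ¬ Sw mk P x β j) :
    hist mk P x (seg β n) = hist mk P x (seg β k) := by
  induction n, hkn using Nat.le_induction with
  | base => rfl
  | succ n hn ih =>
    rw [sw_neg (h n hn (by omega)), ih fun j h1 h2 => h j h1 (by omega)]

lemma sw_exists {x β} (h1 : ∀ r, ∀ᶠ n in atTop, mk r (seg β n) = 1) (h2 : ∀ n, ∃ k, x ∈ P n (seg β k)) (k) :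
    ∃ k' ≥ k, Sw mk P x β k' := by
  by_contra hcon
  push Not at hcon
  have hc : ∀ n ≥ k, hist mk P x (seg β n) = hist mk P x (seg β k) := fun n hn =>
    sw_const n hn fun j hj _ => hcon j hj
  set h := hist mk P x (seg β k) with hh
  choose K hK using h2
  obtain ⟨N, hN⟩ := eventually_atTop.1 (h1 (start h))
  let L := k + N + ((Finset.range (h.length+1)).sup K)
  apply hcon L (by omega)
  unfold Sw
  rw [hc L (by omega)]
  refine ⟨by rw [hN _ (by omega)]; norm_num, fun n hn => ⟨seg β (K n), seg_prefix β ?_, hK n⟩⟩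
  have : K n ≤ (Finset.range (h.length+1)).sup K := Finset.le_sup (by simp; omega)
  omega

lemma sw_next {x β} (hs : ∀ k, ∃ k' ≥ k, Sw mk P x β k') (k) :
    ∃ k' ≥ k, Sw mk P x β k' ∧ hist mk P x (seg β k') = hist mk P x (seg β k) := by
  classical
  refine ⟨Nat.find (hs k), (Nat.find_spec (hs k)).1, (Nat.find_spec (hs k)).2, ?_⟩
  refine sw_const _ (Nat.find_spec (hs k)).1 fun j hj hlt hsw => Nat.find_min (hs k) hlt ⟨hj, hsw⟩

lemma FF_div (hmk : ∀ r, IsMartingale (mk r)) (hmk4 : ∀ r, mk r r ≤ 1/4)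
    {x β} (h1 : ∀ r, ∀ᶠ n in atTop, mk r (seg β n) = 1) (h2 : ∀ n, ∃ k, x ∈ P n (seg β k)) :
    β ∈ divSet (FF mk P x) := by
  refine osc_pos (FF_mart P hmk hmk4 x).1 β (1/8) (by norm_num) fun N => ?_
  have hs := sw_exists h1 h2
  obtain ⟨k, hk, hsw⟩ := hs N
  obtain ⟨k', hk', hsw', heq⟩ := sw_next hs (k+1)
  refine ⟨k'+1, by omega, k+1, by omega, ?_⟩
  have e1 : FF mk P x (seg β (k'+1)) = val mk (hist mk P x (seg β (k+1))) (seg β (k'+1)) := by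
    rw [← heq, seg_succ, FF_append]
  rw [e1]
  have hst : start (hist mk P x (seg β (k+1))) = seg β (k+1) := by
    rw [sw_pos hsw]; rfl
  have hc := hsw'.1
  rw [heq] at hc
  unfold FF val
  rw [hst] at *
  have h4 := hmk4 (seg β (k+1))
  rw [sub_self, mul_zero, add_zero, add_sub_cancel_left]
  split_ifs
  · exact le_trans (by linarith) (le_abs_self _)
  · exact le_trans (by linarith) (neg_le_abs _)

lemma FF_conv {x β} (h1 : ∀ r, CauchySeq fun n => mk r (seg β n)) {n : ℕ} (h2 : ∀ k, x ∉ P n (seg β k)) :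
    β ∉ divSet (FF mk P x) := by
  refine osc_zero β ?_
  have hlen : ∀ k, (hist mk P x (seg β k)).length ≤ n := by
    intro k
    induction k with
    | zero => simp [seg, hist_nil]
    | succ k ih =>
      by_cases hsw : Sw mk P x β k
      · rw [sw_pos hsw, List.length_cons]
        by_contra hcon
        obtain ⟨t, ht, hxt⟩ := hsw.2 n (by omega)
        rw [prefix_seg β ht] at hxt
        exact h2 _ hxt
      · rwa [sw_neg hsw]
  have hfin : ∃ N, ∀ k ≥ N, ¬ Sw mk P x β k := by
    by_contra hcon
    push Not at hcon
    have : ∀ L, ∃ k, L ≤ (hist mk P x (seg β k)).length := by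
      intro L
      induction L with
      | zero => exact ⟨0, Nat.zero_le _⟩
      | succ L ih =>
        obtain ⟨k, hk⟩ := ih
        obtain ⟨k', hk', hsw, heq⟩ := sw_next hcon k
        refine ⟨k'+1, ?_⟩
        rw [sw_pos hsw, heq, List.length_cons]
        omega
    obtain ⟨k, hk⟩ := this (n+1)
    have := hlen k
    omega
  obtain ⟨N, hN⟩ := hfin
  set h := hist mk P x (seg β N) with hh
  obtain ⟨l, hl⟩ := cauchySeq_tendsto_of_complete (h1 (start h))
  have : Tendsto (fun k => val mk h (seg β k)) atTop (𝓝 (VV mk h + (if VV mk h ≤ 1/2 then 1 else -1) / 4 * (l - mk (start h) (start h)))) :=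
    ((hl.sub_const _).const_mul _).const_add _
  refine (this.congr' ?_).cauchySeq
  filter_upwards [eventually_ge_atTop N] with k hk
  unfold FF
  rw [sw_const k hk fun j hj _ => hN j hj]

end Strategy

lemma mart_le {m : List Bool → ℝ} (hm : IsMartingale m) (s) : m s ≤ 2 ^ s.length * m [] := by
  induction s using List.reverseRecOn with
  | nil => simp
  | append_singleton s i ih =>
    have h1 := hm.2 s
    have h2 := (hm.1 (s ++ [false])).1
    have h3 := (hm.1 (s ++ [true])).1
    rw [List.length_append, List.length_singleton, pow_succ]
    cases i <;> linarith

theorem main_aux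
    (μ : Measure (ℕ → Bool))
    (hμ : ∀ s : List Bool, μ (cyl s) = (1/2 : ℝ≥0∞) ^ s.length)
    (𝒢 : Set (ℕ → Bool)) (h𝒢0 : μ 𝒢 = 0)
    (G : Set ((ℕ → ℕ) × (ℕ → Bool))) (hGmeas : MeasurableSet G)
    (hGsub : ∀ p ∈ G, p.2 ∈ 𝒢)
    (hGsec : ∀ α : ℕ → ℕ, IsGδ {β | (α, β) ∈ G}) :
    ∃ F : (ℕ → ℕ) → Mart, Measurable F ∧
      ∀ α : ℕ → ℕ, {β | (α, β) ∈ G} = divSet (F α).1 := by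
  obtain ⟨P, hP, hPG⟩ := borel_gdelta_uniform G hGmeas hGsec
  have := fun r : List Bool => lemZ (μ := μ) hμ h𝒢0 (1/4 / 2 ^ r.length) (by positivity)
  choose mk h1 h2 h3 h4 using this
  have h5 : ∀ r, mk r r ≤ 1/4 := by
    intro r
    refine (mart_le (h1 r) r).trans ?_
    calc 2 ^ r.length * mk r [] ≤ 2 ^ r.length * (1/4 / 2 ^ r.length) := by gcongr; exact h2 r
      _ = 1/4 := by field_simp
  refine ⟨fun x => ⟨FF mk P x, FF_mart P h1 h5 x⟩, ?_, ?_⟩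
  · exact Measurable.subtype_mk (measurable_pi_lambda _ fun s => FF_meas hP s)
  · intro x
    ext β
    constructor
    · intro hβ
      exact FF_div h1 h5 (fun r => h4 r β (hGsub _ hβ)) ((hPG x β).1 hβ)
    · intro hβ
      by_contra hn
      have hn : (x, β) ∉ G := hn
      rw [hPG] at hn
      push Not at hn
      obtain ⟨n, hn⟩ := hn
      exact FF_conv (fun r => h3 r β) hn hβ

/-- for a nonempty Gδ set `𝒢 ⊆ 2^ω` of λ-measure zero and a
Borel `G ⊆ ω^ω × 2^ω` contained in `ω^ω × 𝒢` with Gδ vertical sections, there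
is a Borel map `F : ω^ω → 𝓜` with `G_α = D(F(α))` for every `α`. -/
theorem borel_parametrized_divergence
    (μ : Measure (ℕ → Bool))
    (hμ : ∀ s : List Bool, μ (cyl s) = (1/2 : ℝ≥0∞) ^ s.length)
    (𝒢 : Set (ℕ → Bool)) (h𝒢ne : 𝒢.Nonempty) (h𝒢 : IsGδ 𝒢) (h𝒢0 : μ 𝒢 = 0)
    (G : Set ((ℕ → ℕ) × (ℕ → Bool))) (hGmeas : MeasurableSet G)
    (hGsub : ∀ p ∈ G, p.2 ∈ 𝒢)
    (hGsec : ∀ α : ℕ → ℕ, IsGδ {β | (α, β) ∈ G}) :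
    ∃ F : (ℕ → ℕ) → Mart, Measurable F ∧
      ∀ α : ℕ → ℕ, {β | (α, β) ∈ G} = divSet (F α).1 := by
  exact main_aux μ hμ 𝒢 h𝒢0 G hGmeas hGsub hGsec
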